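/- arXiv:2512.08791 — 2 statements merged into one kernel-verified Lean document; each statement's English description precedes it below -/
import Mathlib

section
/- Let R be a commutative ring, let m ≥ 1, and let t_1, …, t_m ∈ R. Then det_{1≤i,j≤m}( t_i^{m−j} − t_i^{m+j} ) = ∏_{i=1}^{m} (1 − t_i²) · ∏_{1≤i<j≤m} (t_i − t_j)(1 − t_i t_j). -/
/-- The recurrence for the rescaled Chebyshev polynomials `S`, at natural number indices. -/
lemma chebyshevS_natCast_add_two (R : Type*) [CommRing R] (j : ℕ) :
    Polynomial.Chebyshev.S R ((j + 2 : ℕ) : ℤ) =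
      Polynomial.X * Polynomial.Chebyshev.S R ((j + 1 : ℕ) : ℤ) -
        Polynomial.Chebyshev.S R (j : ℤ) := by
  push_cast
  exact Polynomial.Chebyshev.S_add_two R j

/-- Evaluation of the homogenized rescaled Chebyshev polynomial `S j` at `(1 + t ^ 2, t)`. -/
lemma sum_coeff_chebyshevS_mul_pow {R : Type*} [CommRing R] (t : R) (j d : ℕ) :
    (1 - t ^ 2) * ∑ k ∈ Finset.range (j + d + 1),
        (1 + t ^ 2) ^ k * t ^ (j + d - k) * (Polynomial.Chebyshev.S R j).coeff k =
      t ^ d - t ^ (2 * j + d + 2) := by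
  induction j using Nat.twoStepInduction generalizing d with
  | zero =>
    simp [Polynomial.coeff_one]
    ring
  | one =>
    simp [Polynomial.coeff_X, show 0 < 1 + d by lia]
    ring
  | more j ih₀ ih₁ =>
    have e₁ : ∑ k ∈ Finset.range (j + 2 + d + 1), (1 + t ^ 2) ^ k * t ^ (j + 2 + d - k) *
          (Polynomial.X * Polynomial.Chebyshev.S R ((j + 1 : ℕ) : ℤ)).coeff k =
        (1 + t ^ 2) * ∑ k ∈ Finset.range (j + 1 + d + 1), (1 + t ^ 2) ^ k *
          t ^ (j + 1 + d - k) * (Polynomial.Chebyshev.S R ((j + 1 : ℕ) : ℤ)).coeff k := by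
      rw [Finset.sum_range_succ', Finset.mul_sum, show j + 2 + d = j + 1 + d + 1 by lia]
      simp only [Polynomial.coeff_X_mul, Polynomial.coeff_X_mul_zero, mul_zero, add_zero,
        Nat.add_sub_add_right]
      exact Finset.sum_congr rfl fun k _ => by ring
    have h₀ := ih₀ (d + 2)
    rw [show j + (d + 2) = j + 2 + d by lia] at h₀
    simp only [chebyshevS_natCast_add_two, Polynomial.coeff_sub, mul_sub, Finset.sum_sub_distrib]
    rw [h₀, e₁, mul_left_comm, ih₁]
    ring

/-- The rescaled Chebyshev polynomial `S j` is monic of degree `j`. -/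
lemma coeff_chebyshevS_of_le {R : Type*} [CommRing R] (j k : ℕ) (hjk : j ≤ k) :
    (Polynomial.Chebyshev.S R j).coeff k = if k = j then 1 else 0 := by
  induction j using Nat.twoStepInduction generalizing k with
  | zero => simp [Polynomial.coeff_one]
  | one => simp [Polynomial.coeff_X, eq_comm]
  | more j ih₀ ih₁ =>
    obtain ⟨k, rfl⟩ : ∃ l, k = l + 1 := ⟨k - 1, by lia⟩
    rw [chebyshevS_natCast_add_two, Polynomial.coeff_sub, Polynomial.coeff_X_mul,
      ih₁ k (by lia), ih₀ (k + 1) (by lia), if_neg (show k + 1 ≠ j by lia), sub_zero]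
    simp

/-- For a commutative ring `R`, `m ≥ 1` and `t_1, …, t_m ∈ R`,
`det_{1≤i,j≤m}( t_i^{m−j} − t_i^{m+j} )
  = ∏_{i=1}^{m} (1 − t_i²) · ∏_{1≤i<j≤m} (t_i − t_j)(1 − t_i t_j)`.
(Indices `i j : Fin m` are `0`-based, so the `1`-based exponents `m − j` and
`m + j` become `m − 1 − j` and `m + j + 1`.) -/
theorem det_pow_sub_pow {R : Type*} [CommRing R] (m : ℕ) (hm : 1 ≤ m) (t : Fin m → R) :
    Matrix.det (Matrix.of fun i j : Fin m =>
        t i ^ (m - 1 - (j : ℕ)) - t i ^ (m + (j : ℕ) + 1)) =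
      (∏ i : Fin m, (1 - t i ^ 2)) *
        ∏ i : Fin m, ∏ j ∈ Finset.Ioi i, ((t i - t j) * (1 - t i * t j)) := by
  let C : Matrix (Fin m) (Fin m) R :=
    Matrix.of fun k j => (Polynomial.Chebyshev.S R ((j : ℕ) : ℤ)).coeff k
  have hC : C.det = 1 := by
    rw [Matrix.det_of_isUpperTriangular]
    · exact Finset.prod_eq_one fun i _ => by simp [C, coeff_chebyshevS_of_le]
    · intro k j hjk
      have hlt : (j : ℕ) < k := hjk
      simp [C, coeff_chebyshevS_of_le (R := R) j k hlt.le, hlt.ne']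
  have hfactor : (Matrix.of fun i j : Fin m =>
        t i ^ (m - 1 - (j : ℕ)) - t i ^ (m + (j : ℕ) + 1)) =
      Matrix.diagonal (fun i => 1 - t i ^ 2) *
        (Matrix.projVandermonde (fun i => 1 + t i ^ 2) t * C) := by
    ext i j
    have h := sum_coeff_chebyshevS_mul_pow (t i) j (m - 1 - j)
    rw [show (j : ℕ) + (m - 1 - j) = m - 1 by lia, show m - 1 + 1 = m by lia,
      show 2 * (j : ℕ) + (m - 1 - j) + 2 = m + j + 1 by lia, Finset.sum_range] at h
    rw [Matrix.diagonal_mul, Matrix.mul_apply, Matrix.of_apply, ← h]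
    congr 1
    refine Finset.sum_congr rfl fun k _ => ?_
    rw [Matrix.projVandermonde_apply, Fin.val_rev, Nat.sub_sub, Nat.add_comm 1]
    rfl
  rw [hfactor, Matrix.det_mul, Matrix.det_mul, hC, mul_one, Matrix.det_diagonal,
    Matrix.det_projVandermonde]
  congr 1
  exact Finset.prod_congr rfl fun i _ => Finset.prod_congr rfl fun j _ => by ring
end

section
/- Let K be a field, let m ≥ 1, and let t_1, …, t_m be nonzero elements of K. Then det_{1≤i,j≤m}( (t_i + t_i^{−1})^{m−j} ) = (−1)^{m(m−1)/2} · ∏_{i=1}^{m} t_i^{1−m} · ∏_{1≤i<j≤m} (t_i − t_j)(1 − t_i t_j). -/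
/-- Each index of `Fin m` lies in exactly `m - 1` pairs `i < j`. -/
theorem Fin.prod_prod_Ioi_mul {M : Type*} [CommMonoid M] {m : ℕ} (f : Fin m → M) :
    ∏ i, ∏ j ∈ Finset.Ioi i, (f i * f j) = ∏ i, f i ^ (m - 1) := by
  have hswap : ∏ i, ∏ j ∈ Finset.Ioi i, f j = ∏ j, ∏ _i ∈ Finset.Iio j, f j :=
    Finset.prod_comm' (by simp)
  simp only [Finset.prod_mul_distrib, hswap, Finset.prod_const, Fin.card_Ioi, Fin.card_Iio]
  rw [← Finset.prod_mul_distrib]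
  refine Finset.prod_congr rfl fun i _ => ?_
  rw [← pow_add]
  congr 1
  lia

/-- There are `m * (m - 1) / 2` pairs `i < j` in `Fin m`. -/
theorem Fin.prod_prod_Ioi_const {M : Type*} [CommMonoid M] (m : ℕ) (a : M) :
    ∏ i : Fin m, ∏ _j ∈ Finset.Ioi i, a = a ^ (m * (m - 1) / 2) := by
  simp only [Finset.prod_const, Fin.card_Ioi]
  rw [Finset.prod_pow_eq_pow_sum, Fin.sum_univ_eq_sum_range (fun i => m - 1 - i),
    Finset.sum_range_reflect (fun i => i), Finset.sum_range_id]

/-- For a field `K`, `m ≥ 1` and nonzero `t_1, …, t_m ∈ K`,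
`det_{1≤i,j≤m}( (t_i + t_i^{−1})^{m−j} )
  = (−1)^{m(m−1)/2} · ∏_{i=1}^{m} t_i^{1−m} · ∏_{1≤i<j≤m} (t_i − t_j)(1 − t_i t_j)`.
(Indices are `0`-based, so the `1`-based exponent `m − j` becomes `m − 1 − j`.) -/
theorem det_pow_add_inv {K : Type*} [Field K] (m : ℕ) (hm : 1 ≤ m) (t : Fin m → K)
    (ht : ∀ i, t i ≠ 0) :
    Matrix.det (Matrix.of fun i j : Fin m => (t i + (t i)⁻¹) ^ (m - 1 - (j : ℕ))) =
      (-1 : K) ^ (m * (m - 1) / 2) * (∏ i : Fin m, t i ^ ((1 : ℤ) - (m : ℤ))) *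
        ∏ i : Fin m, ∏ j ∈ Finset.Ioi i, ((t i - t j) * (1 - t i * t j)) := by
  have hmat : Matrix.of (fun i j : Fin m => (t i + (t i)⁻¹) ^ (m - 1 - (j : ℕ))) =
      Matrix.projVandermonde 1 fun i => t i + (t i)⁻¹ := by
    ext i j
    rw [Matrix.projVandermonde_apply, Matrix.of_apply, Fin.val_rev, Pi.one_apply, one_pow,
      one_mul, Nat.sub_sub, add_comm 1]
  have hfactor (i j : Fin m) :
      (1 : Fin m → K) j * (t i + (t i)⁻¹) - (1 : Fin m → K) i * (t j + (t j)⁻¹) =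
        -1 * ((t i)⁻¹ * (t j)⁻¹) * ((t i - t j) * (1 - t i * t j)) := by
    have hi := ht i
    have hj := ht j
    simp only [Pi.one_apply]
    field_simp
    ring
  have hpow (i : Fin m) : (t i)⁻¹ ^ (m - 1) = t i ^ ((1 : ℤ) - (m : ℤ)) := by
    rw [← neg_sub, zpow_neg, ← Nat.cast_pred hm, zpow_natCast, inv_pow]
  rw [hmat, Matrix.det_projVandermonde]
  simp only [hfactor, ← hpow]
  simp only [← Fin.prod_prod_Ioi_mul, ← Fin.prod_prod_Ioi_const, ← Finset.prod_mul_distrib]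
end
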